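/- (Lemma: B is an orthonormal basis for symmetric matrices) For every positive integer m, every real symmetric matrix R ∈ ℝ^{2^m × 2^m} can be expanded as R = Σ_{(a,b) ∈ Y₂^m} 2^{-m} Tr[R · D(a,b)] · D(a,b), where the sum runs over all pairs (a,b) ∈ Y₂^m. -/

import Mathlib

open Matrix

/-- Mod-2 inner product of binary tuples. -/
def bip {I : Type*} [Fintype I] (a b : I → ZMod 2) : ZMod 2 := ∑ i, a i * b i

/-- The sign `(-1)^ε` for `ε ∈ ℤ/2`: `1` if `ε = 0`, `-1` if `ε = 1`. -/
noncomputable def sgn (x : ZMod 2) : ℝ := (-1 : ℝ) ^ x.val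

/-- The binary Heisenberg-Weyl signed permutation matrix `D(a,b)`
(equivalently the iterated Kronecker product of the `X^{a_i} Z^{b_i}`), with entries
`D(a,b)_{u,v} = (-1)^{b·v}` if `u = v + a` and `0` otherwise. -/
noncomputable def Dmat {I : Type*} [Fintype I] [DecidableEq I] (a b : I → ZMod 2) :
    Matrix (I → ZMod 2) (I → ZMod 2) ℝ :=
  Matrix.of fun u v => if u = v + a then sgn (bip b v) else 0

/-!
The matrices `D(a,b)` satisfy the completeness relation
`∑_{a,b} D(a,b)_{uv} D(a,b)_{xy} = 2^m δ_{ux} δ_{vy}`: the entries force `a = u + v = x + y`, and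
the sum over `b` is then an orthogonality relation for characters of `(ℤ/2)^m`. Hence every real
matrix has an expansion with coefficients `2^{-m} Tr[R D(a,b)ᵀ]`. Since
`D(a,b)ᵀ = (-1)^{a·b} D(a,b)`, for symmetric `R` these coefficients equal `2^{-m} Tr[R D(a,b)]` and
vanish when `a·b = 1`.
-/

section WeylMatrices

variable {I : Type*} [Fintype I]

lemma sgn_of_ne_zero {x : ZMod 2} (hx : x ≠ 0) : sgn x = -1 := by
  have hx_one : x = 1 := Fin.eq_one_of_ne_zero x hx
  simp [hx_one, sgn, ZMod.val_one]

lemma sgn_add (x y : ZMod 2) : sgn (x + y) = sgn x * sgn y :=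
  (AddChar.zmodChar 2 (even_two.neg_one_pow : (-1 : ℝ) ^ 2 = 1)).map_add_eq_mul x y

lemma sgn_bip_add (b u v : I → ZMod 2) :
    sgn (bip b (u + v)) = sgn (bip b u) * sgn (bip b v) :=
  (congrArg sgn (dotProduct_add b u v)).trans (sgn_add _ _)

lemma bip_comm (a b : I → ZMod 2) : bip a b = bip b a :=
  dotProduct_comm a b

/-- The character `b ↦ (-1)^{b·v}` of `(ℤ/2)^I`, bundled so that orthogonality of characters
applies to sums over `b`. -/
noncomputable def bipChar (v : I → ZMod 2) : AddChar (I → ZMod 2) ℝ where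
  toFun b := sgn (bip b v)
  map_zero_eq_one' := by simp [sgn, bip]
  map_add_eq_mul' b c := by simp only [bip_comm _ v, sgn_bip_add]

lemma bipChar_apply (v b : I → ZMod 2) : bipChar v b = sgn (bip b v) :=
  rfl

lemma bipChar_eq_zero_iff {v : I → ZMod 2} : bipChar v = 0 ↔ v = 0 := by
  classical
  refine ⟨fun hv => ?_, by rintro rfl; ext b; simp [bipChar_apply, bip, sgn]⟩
  by_contra hne
  obtain ⟨i, hi⟩ := Function.ne_iff.mp hne
  have h_eval : bipChar v (Pi.single i 1) = -1 :=
    calc sgn (Pi.single i 1 ⬝ᵥ v) = sgn (v i) := by rw [single_one_dotProduct]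
      _ = -1 := sgn_of_ne_zero hi
  norm_num [hv] at h_eval

variable [DecidableEq I]

lemma sum_sgn_bip (v : I → ZMod 2) :
    ∑ b, sgn (bip b v) = if v = 0 then 2 ^ Fintype.card I else 0 := by
  classical
  simpa [bipChar_eq_zero_iff, bipChar_apply] using (bipChar v).sum_eq_ite

lemma Dmat_apply (a b u v : I → ZMod 2) :
    Dmat a b u v = if a = u + v then sgn (bip b v) else 0 := by
  have h_shift : u = v + a ↔ a = u + v := by
    rw [← sub_eq_iff_eq_add', ZModModule.sub_eq_add, eq_comm]
  simp only [Dmat, of_apply, h_shift]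

lemma transpose_Dmat (a b : I → ZMod 2) : (Dmat a b)ᵀ = sgn (bip a b) • Dmat a b := by
  ext u v
  rw [transpose_apply, Matrix.smul_apply, smul_eq_mul, Dmat_apply, Dmat_apply, add_comm v u,
    mul_ite, mul_zero]
  refine ite_congr rfl (fun ha => ?_) fun _ => rfl
  have hu : u = a + v := by rw [ha, add_assoc, ZModModule.add_self, add_zero]
  rw [hu, sgn_bip_add, bip_comm a b]

lemma sum_Dmat_mul_Dmat (u v x y : I → ZMod 2) :
    ∑ p : (I → ZMod 2) × (I → ZMod 2), Dmat p.1 p.2 u v * Dmat p.1 p.2 x y =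
      if u = x ∧ v = y then 2 ^ Fintype.card I else 0 := by
  have h_iff : x + y = u + v ∧ v + y = 0 ↔ u = x ∧ v = y := by
    rw [← ZModModule.sub_eq_add v y, sub_eq_zero]
    exact and_congr_left fun hvy => by rw [hvy, add_left_inj, eq_comm]
  have h_sum_b (a : I → ZMod 2) : ∑ b, Dmat a b u v * Dmat a b x y =
      if a = x + y then if a = u + v ∧ v + y = 0 then 2 ^ Fintype.card I else 0 else 0 := by
    simp only [Dmat_apply, ite_mul, zero_mul, mul_ite, mul_zero, ← sgn_bip_add,
      Finset.sum_ite_irrel, Finset.sum_const_zero, sum_sgn_bip, ite_and]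
  rw [Fintype.sum_prod_type]
  simp only [h_sum_b, Finset.sum_ite_eq', Finset.mem_univ, if_true, h_iff]

lemma eq_sum_trace_mul_transpose_Dmat (R : Matrix (I → ZMod 2) (I → ZMod 2) ℝ) :
    R = ∑ p : (I → ZMod 2) × (I → ZMod 2),
      (trace (R * (Dmat p.1 p.2)ᵀ) / 2 ^ Fintype.card I) • Dmat p.1 p.2 := by
  ext x y
  symm
  calc (∑ p : (I → ZMod 2) × (I → ZMod 2),
        (trace (R * (Dmat p.1 p.2)ᵀ) / 2 ^ Fintype.card I) • Dmat p.1 p.2) x y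
      = ∑ p : (I → ZMod 2) × (I → ZMod 2), ∑ u, ∑ v,
          R u v / 2 ^ Fintype.card I * (Dmat p.1 p.2 u v * Dmat p.1 p.2 x y) := by
        simp only [Matrix.sum_apply, Matrix.smul_apply, smul_eq_mul, ← sum_hadamard_eq,
          hadamard_apply, Finset.sum_div, Finset.sum_mul, mul_div_right_comm, mul_assoc]
    _ = ∑ u, ∑ v, R u v / 2 ^ Fintype.card I * ∑ p : (I → ZMod 2) × (I → ZMod 2),
          Dmat p.1 p.2 u v * Dmat p.1 p.2 x y := by
        simp only [Finset.mul_sum]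
        rw [Finset.sum_comm]
        exact Finset.sum_congr rfl fun _ _ => Finset.sum_comm
    _ = R x y := by
        simp [sum_Dmat_mul_Dmat, ite_and]

lemma trace_mul_transpose_Dmat {R : Matrix (I → ZMod 2) (I → ZMod 2) ℝ} (hR : R.IsSymm)
    (a b : I → ZMod 2) : trace (R * (Dmat a b)ᵀ) = trace (R * Dmat a b) := by
  rw [← trace_transpose_mul R, hR, transpose_transpose]

lemma trace_mul_Dmat_eq_zero {R : Matrix (I → ZMod 2) (I → ZMod 2) ℝ} (hR : R.IsSymm)
    {a b : I → ZMod 2} (hab : bip a b ≠ 0) : trace (R * Dmat a b) = 0 := by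
  have h_neg : trace (R * Dmat a b) = -trace (R * Dmat a b) :=
    calc trace (R * Dmat a b) = trace (R * (Dmat a b)ᵀ) := (trace_mul_transpose_Dmat hR a b).symm
      _ = -trace (R * Dmat a b) := by
        rw [transpose_Dmat, sgn_of_ne_zero hab, neg_one_smul, mul_neg, trace_neg]
  exact self_eq_neg.mp h_neg

theorem weyl_sym_expansion_general (R : Matrix (I → ZMod 2) (I → ZMod 2) ℝ) (hR : R.IsSymm) :
    R = ∑ p ∈ Finset.univ.filter
        (fun p : (I → ZMod 2) × (I → ZMod 2) => bip p.1 p.2 = 0),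
      (trace (R * Dmat p.1 p.2) / 2 ^ Fintype.card I) • Dmat p.1 p.2 := by
  rw [Finset.sum_filter_of_ne]
  · simpa only [trace_mul_transpose_Dmat hR] using eq_sum_trace_mul_transpose_Dmat R
  · intro p _ h_term
    by_contra h_bip
    exact h_term (by rw [trace_mul_Dmat_eq_zero hR h_bip, zero_div, zero_smul])

end WeylMatrices

/-- Expansion of a symmetric matrix in the orthonormal basis
`{2^{-m/2} D(a,b) : (a,b) ∈ Y₂^m}`. -/
theorem weyl_sym_expansion {m : ℕ} (hm : 0 < m)
    (R : Matrix (Fin m → ZMod 2) (Fin m → ZMod 2) ℝ) (hR : Rᵀ = R) :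
    R = ∑ p ∈ Finset.univ.filter
        (fun p : (Fin m → ZMod 2) × (Fin m → ZMod 2) => bip p.1 p.2 = 0),
      (Matrix.trace (R * Dmat p.1 p.2) / 2 ^ m) • Dmat p.1 p.2 := by
  simpa only [Fintype.card_fin] using weyl_sym_expansion_general R hR
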